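/- There is a constant α > 0 (one may take α = 2^{-32}) such that for every integer t ≥ 2 and every [n,k,d] code C with d − 1 ≥ (1 − 1/(10m))·n where m = 2^t, the Tanner pair (H^n_t, C²) is α^t-robust, where H^n_2 = G^n_{4,2} and H^n_t = G^{n^{2^{t-2}}}_{4,2} © H^n_{t-1} for t > 2; in particular C^{2^t} = TPC(H^n_t, C²). -/

import Mathlib

/-- Relative Hamming distance between two words indexed by a finite type. -/
noncomputable def relHammingDist {ι F : Type} [Fintype ι] [DecidableEq F] (x y : ι → F) : ℝ :=
  (hammingDist x y : ℝ) / (Fintype.card ι)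

/-- Relative Hamming distance from a word to (the nearest codeword of) a code. -/
noncomputable def distToCode {ι F : Type} [Fintype ι] [DecidableEq F] (C : Set (ι → F)) (r : ι → F) : ℝ :=
  sInf (relHammingDist r '' C)

/-- Minimum Hamming distance of a code. -/
noncomputable def minDist {ι F : Type} [Fintype ι] [DecidableEq F] (C : Set (ι → F)) : ℕ :=
  sInf {e | ∃ x ∈ C, ∃ y ∈ C, x ≠ y ∧ hammingDist x y = e}

/-- The `m`-fold tensor power `C^m` of a code `C ⊆ F^n`. -/
def tensorPow {F : Type} {n : ℕ} (C : Set (Fin n → F)) (m : ℕ) :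
    Set ((Fin m → Fin n) → F) :=
  {r | ∀ (b : Fin m) (x : Fin m → Fin n), (fun i => r (Function.update x b i)) ∈ C}

/-- The neighborhood map of one test of `G^{4,2}` over an abstract coordinate type `ι`:
a test of the 4-Product tester (a 3-dimensional slice, given by `(b₁,i₁)`) composed with
a test of the 3-Product tester (a further 2-dimensional slice, given by `(b₂,i₂)`). -/
def g42view {ι : Type} (p : (Fin 4 × ι) × (Fin 3 × ι)) (q : Fin 2 → ι) : Fin 4 → ι :=
  p.1.1.insertNth p.1.2 (p.2.1.insertNth p.2.2 q)

/-- Uncurrying equivalence for blocks of coordinates. -/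
def blockEquiv (n a b : ℕ) : (Fin a → Fin b → Fin n) ≃ (Fin (a * b) → Fin n) :=
  (Equiv.curry (Fin a) (Fin b) (Fin n)).symm.trans
    (Equiv.arrowCongr finProdFinEquiv (Equiv.refl (Fin n)))

/-- Transport along an equality of index sizes. -/
def reFin (n : ℕ) {a b : ℕ} (h : a = b) : (Fin a → Fin n) ≃ (Fin b → Fin n) :=
  Equiv.arrowCongr (finCongr h) (Equiv.refl (Fin n))

/-- The (right-vertex) index type of the recursively composed Tanner graph `H^n_t`
(with `t = s + 2`): `H^n_2 = G^n_{4,2}` and `H^n_t = G^{n^{2^{t-2}}}_{4,2} © H^n_{t-1}`. -/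
def Rty (n : ℕ) : ℕ → Type := fun s =>
  Nat.rec ((Fin 4 × Fin n) × (Fin 3 × Fin n))
    (fun s ih =>
      ((Fin 4 × (Fin (2 ^ (s + 1)) → Fin n)) × (Fin 3 × (Fin (2 ^ (s + 1)) → Fin n))) × ih) s

instance RtyFintype (n : ℕ) : ∀ s, Fintype (Rty n s) := fun s =>
  Nat.rec (motive := fun s => Fintype (Rty n s))
    (inferInstanceAs (Fintype ((Fin 4 × Fin n) × (Fin 3 × Fin n))))
    (fun s ih =>
      letI : Fintype (Rty n s) := ih
      inferInstanceAs (Fintype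
        ((((Fin 4 × (Fin (2 ^ (s + 1)) → Fin n)) × (Fin 3 × (Fin (2 ^ (s + 1)) → Fin n))) ×
          Rty n s)))) s

/-- The ordered adjacency lists of `H^n_t` (with `t = s + 2`): each test `j : Rty n s`
reads a 2-dimensional pattern of coordinates of `[n]^{2^t}` (identified with
`Fin (2^t) → Fin n`). -/
def ellH (n : ℕ) : ∀ s, Rty n s → (Fin 2 → Fin n) → (Fin (2 ^ (s + 2)) → Fin n) := fun s =>
  Nat.rec (motive := fun s => Rty n s → (Fin 2 → Fin n) → (Fin (2 ^ (s + 2)) → Fin n))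
    (fun p q => reFin n (by norm_num) (g42view p q))
    (fun s ih p q =>
      reFin n (by rw [pow_succ, pow_succ]; ring)
        ((blockEquiv n 4 (2 ^ (s + 1)))
          (g42view p.1
            ((blockEquiv n 2 (2 ^ (s + 1))).symm
              (reFin n (by rw [pow_succ]; ring) (ih p.2 q))))))
    s

/-!
The heart of the matter is the product tester, which reads a random axis-parallel hyperplane of a
word `r` on a grid. Correcting every hyperplane orthogonal to a fixed axis to a nearest codeword
gives, for each axis, a word all of whose lines in the *other* directions are codewords. Take three
such words `g₁, g₂, g₃`, for the axes `a, b, e`. A difference such as `g₁ - g₃`, once nonzero at a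
point, is nonzero on a large subgrid around it, so unless `r` is far from the corrected words, few
slices orthogonal to `a` (or `b`) contain many lines on which `g₃` disagrees with `g₁` (or `g₂`).
Outside these heavy slices every line in direction `e` shows `g₁ = g₂`, because both are codewords
there and they differ in fewer than `d` places; erasure decoding along `a` extends the common word
to a codeword of the tensor power. Robustness multiplies under Tanner composition, which carries the
estimate first to `G_{4,2}` and then, applied to tensor powers of `C`, to `H_t`.
-/

section RobustTesting

open Finset Function

theorem mul_card_le_mul_card_of_le_mul_card_fiber {α β : Type*} [DecidableEq β] {s : Finset α}
    {t : Finset β} (f : α → β) {n c : ℕ} (h : ∀ b ∈ t, n ≤ c * #{a ∈ s | f a = b}) :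
    n * #t ≤ c * #s :=
  calc
    n * #t = ∑ _b ∈ t, n := by rw [sum_const, smul_eq_mul, mul_comm]
    _ ≤ ∑ b ∈ t, c * #{a ∈ s | f a = b} := sum_le_sum h
    _ = c * #{a ∈ s | f a ∈ t} := by rw [← mul_sum, sum_card_fiberwise_eq_card_filter]
    _ ≤ c * #s := Nat.mul_le_mul_left _ (card_filter_le _ _)

theorem pow_le_two_mul_pow_of_le {N d j m : ℕ} (hjm : j ≤ m) (h : N ^ m ≤ 2 * d ^ m) :
    N ^ j ≤ 2 * d ^ j := by
  rcases le_total N d with hNd | hdN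
  · exact (Nat.pow_le_pow_left hNd j).trans (Nat.le_mul_of_pos_left _ two_pos)
  rcases d.eq_zero_or_pos with rfl | hd
  · rcases m.eq_zero_or_pos with rfl | hm
    · simp [Nat.le_zero.1 hjm]
    · obtain rfl : N = 0 := by simpa [hm.ne'] using h
      exact Nat.le_mul_of_pos_left _ two_pos
  refine Nat.le_of_mul_le_mul_right ?_ (Nat.pow_pos (n := m - j) hd)
  calc
    N ^ j * d ^ (m - j) ≤ N ^ j * N ^ (m - j) := by gcongr
    _ = N ^ m := pow_mul_pow_sub N hjm
    _ ≤ 2 * d ^ m := h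
    _ = 2 * d ^ j * d ^ (m - j) := by rw [mul_assoc, pow_mul_pow_sub d hjm]

section GridCodes

variable {F ι J : Type*}

theorem hammingDist_le_add_card_mul_of_eqOn [Fintype ι] [Fintype J] [DecidableEq J]
    [DecidableEq F] {r g c : (J → ι) → F} {a : J} {A : Finset ι}
    (h : ∀ x, x a ∉ A → c x = g x) :
    hammingDist r c ≤ hammingDist r g + #A * Fintype.card ι ^ (Fintype.card J - 1) := by
  classical
  have hslices : #{x : J → ι | x a ∈ A} = #A * Fintype.card ι ^ (Fintype.card J - 1) := by
    rw [← sum_card_fiberwise_eq_card_filter, sum_const_nat fun i _ => ?_]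
    simpa using Fintype.card_filter_piFinset_const_eq_of_mem univ a (mem_univ i)
  rw [← hslices]
  refine (card_le_card fun x hx => ?_).trans (card_union_le _ _)
  simp only [mem_union, mem_filter, mem_univ, true_and] at hx ⊢
  by_cases hxa : x a ∈ A
  · exact Or.inr hxa
  · exact Or.inl (h x hxa ▸ hx)

variable [Field F]

section LineCode

variable [DecidableEq J] {D : Submodule F (ι → F)}

/-- The code on the grid `J → ι` of all words whose axis-parallel lines in the directions `b ∈ S`
are codewords of `D`; the line through `x` in direction `b` is `f ∘ Function.update x b`. -/
def lineCode (D : Submodule F (ι → F)) (S : Finset J) : Submodule F ((J → ι) → F) where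
  carrier := {f | ∀ b ∈ S, ∀ x : J → ι, f ∘ update x b ∈ D}
  add_mem' hf hg b hb x := D.add_mem (hf b hb x) (hg b hb x)
  zero_mem' _ _ _ := D.zero_mem
  smul_mem' c _ hf b hb x := D.smul_mem c (hf b hb x)

theorem lineCode_anti {S T : Finset J} (h : S ⊆ T) : lineCode D T ≤ lineCode D S :=
  fun _ hf b hb => hf b (h hb)

/-- The tensor power `D^J`, over an arbitrary set `J` of directions and alphabet `ι` of
coordinates. -/
abbrev tensorCode (D : Submodule F (ι → F)) (J : Type*) [DecidableEq J] [Fintype J] :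
    Submodule F ((J → ι) → F) :=
  lineCode D univ

end LineCode

section MinWeight

variable [Fintype ι] [DecidableEq F]

/-- Every nonzero codeword of the linear code `D` has Hamming weight at least `d`, that is, `D` has
minimum distance at least `d`. -/
def HasMinWeight (D : Submodule F (ι → F)) (d : ℕ) : Prop :=
  ∀ w ∈ D, w ≠ 0 → d ≤ hammingNorm w

variable {D : Submodule F (ι → F)} {d : ℕ}

namespace HasMinWeight

theorem eq_of_eqOn_compl (hd : HasMinWeight D d) {B : Finset ι} (hB : #B < d) {v w : ι → F}
    (hv : v ∈ D) (hw : w ∈ D) (h : ∀ i ∉ B, v i = w i) : v = w := by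
  by_contra hne
  refine absurd (hd (v - w) (D.sub_mem hv hw) (sub_ne_zero.2 hne)) (not_le.2 ?_)
  refine (card_le_card fun i hi => ?_).trans_lt hB
  by_contra hiB
  exact (mem_filter.1 hi).2 (sub_eq_zero.2 (h i hiB))

theorem exists_erasureDecoder (hd : HasMinWeight D d) {B : Finset ι} (hB : #B < d) :
    ∃ L : (ι → F) →ₗ[F] (ι → F), (∀ w, L w ∈ D) ∧ (∀ w ∈ D, L w = w) ∧
      ∀ v w : ι → F, (∀ i ∉ B, v i = w i) → L v = L w := by
  let restrict : (ι → F) →ₗ[F] ({i // i ∉ B} → F) := LinearMap.funLeft F F Subtype.val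
  have hker : LinearMap.ker (restrict ∘ₗ D.subtype) = ⊥ :=
    LinearMap.ker_eq_bot.2 fun v w hvw =>
      Subtype.ext (hd.eq_of_eqOn_compl hB v.2 w.2 fun i hi => congrFun hvw ⟨i, hi⟩)
  obtain ⟨decode, hdecode⟩ := LinearMap.exists_leftInverse_of_injective _ hker
  refine ⟨D.subtype ∘ₗ decode ∘ₗ restrict, fun w => (decode (restrict w)).2, fun w hw => ?_,
    fun v w h => ?_⟩
  · exact congrArg Subtype.val (LinearMap.congr_fun hdecode ⟨w, hw⟩)
  · have hres : restrict v = restrict w := funext fun i => h i i.2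
    simp only [LinearMap.comp_apply, hres]

variable [Fintype J] [DecidableEq J]

theorem pow_card_le_card_ne_zero [DecidableEq ι] (hd : HasMinWeight D d) {S : Finset J}
    {f : (J → ι) → F} (hf : f ∈ lineCode D S) {x₀ : J → ι} (hx₀ : f x₀ ≠ 0) :
    d ^ #S ≤ #{x : J → ι | (∀ b ∉ S, x b = x₀ b) ∧ f x ≠ 0} := by
  induction S using Finset.induction_on generalizing x₀ with
  | empty =>
    rw [card_empty, pow_zero, Nat.one_le_iff_ne_zero, Finset.card_ne_zero]
    exact ⟨x₀, by simp [hx₀]⟩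
  | insert b S hb ih =>
    have hline : d ≤ hammingNorm (f ∘ update x₀ b) :=
      hd _ (hf b (mem_insert_self b S) x₀) fun h => hx₀ (by simpa using congrFun h (x₀ b))
    rw [card_insert_of_notMem hb, pow_succ]
    refine (Nat.mul_le_mul_left _ hline).trans ?_
    refine (mul_card_le_mul_card_of_le_mul_card_fiber (c := 1) (fun x : J → ι => x b)
      fun i hi => ?_).trans_eq (one_mul _)
    rw [one_mul]
    refine (ih (lineCode_anti (subset_insert b S) hf) (mem_filter.1 hi).2).trans
      (card_le_card fun x hx => ?_)
    obtain ⟨hagree, hne⟩ := (mem_filter.1 hx).2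
    simp only [mem_filter, mem_univ, true_and, mem_insert, not_or]
    refine ⟨⟨fun c hc => ?_, hne⟩, by simpa using hagree b hb⟩
    rw [hagree c hc.2, update_of_ne hc.1]

protected theorem tensorCode (hd : HasMinWeight D d) :
    HasMinWeight (tensorCode D J) (d ^ Fintype.card J) := by
  classical
  intro f hf hne
  obtain ⟨x₀, hx₀⟩ := ne_iff.1 hne
  simpa [hammingNorm] using hd.pow_card_le_card_ne_zero hf hx₀

end HasMinWeight

end MinWeight

section HeavySlices

variable [Fintype ι] [Fintype J] [DecidableEq J] [DecidableEq ι] [DecidableEq F]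

/-- The `k` for which `f` is not identically zero on the codimension-two slice
`{x | x a = i ∧ x e = k}`. -/
def slicePattern (f : (J → ι) → F) (a e : J) (i : ι) : Finset ι :=
  image (· e) {x : J → ι | x a = i ∧ f x ≠ 0}

/-- The `i` for which `f` is nonzero on at least `d / 2` of the slices `{x | x a = i ∧ x e = k}`. -/
def heavySlices (f : (J → ι) → F) (a e : J) (d : ℕ) : Finset ι :=
  {i | d ≤ 2 * #(slicePattern f a e i)}

theorem mem_slicePattern_self {f : (J → ι) → F} (a e : J) {x : J → ι} (hx : f x ≠ 0) :
    x e ∈ slicePattern f a e (x a) :=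
  mem_image.2 ⟨x, by simp [hx], rfl⟩

variable {D : Submodule F (ι → F)} {d : ℕ} {a b e : J}

namespace HasMinWeight

theorem pow_mul_card_slicePattern_le (hd : HasMinWeight D d) (hae : a ≠ e) {f : (J → ι) → F}
    (hf : f ∈ lineCode D {a, e}ᶜ) (i : ι) :
    d ^ (Fintype.card J - 2) * #(slicePattern f a e i) ≤ #{x : J → ι | x a = i ∧ f x ≠ 0} := by
  refine mul_card_image_le_card _ _ fun k hk => ?_
  obtain ⟨x₀, hx₀, rfl⟩ := mem_image.1 hk
  obtain ⟨rfl, hne⟩ := (mem_filter.1 hx₀).2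
  have hgrid := hd.pow_card_le_card_ne_zero hf hne
  rw [card_compl, card_pair hae] at hgrid
  refine hgrid.trans (card_le_card fun x hx => ?_)
  obtain ⟨hagree, hfx⟩ := (mem_filter.1 hx).2
  simp only [mem_filter, mem_univ, true_and]
  exact ⟨⟨hagree a (by simp), hfx⟩, hagree e (by simp)⟩

theorem pow_mul_card_heavySlices_le (hd : HasMinWeight D d) (hae : a ≠ e) {f : (J → ι) → F}
    (hf : f ∈ lineCode D {a, e}ᶜ) :
    d ^ (Fintype.card J - 1) * #(heavySlices f a e d) ≤ 2 * hammingNorm f := by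
  have hJ : Fintype.card J - 1 = Fintype.card J - 2 + 1 := by
    have : 1 < Fintype.card J := Fintype.one_lt_card_iff.2 ⟨a, e, hae⟩
    omega
  refine mul_card_le_mul_card_of_le_mul_card_fiber (· a) fun i hi => ?_
  calc
    d ^ (Fintype.card J - 1) = d ^ (Fintype.card J - 2) * d := by rw [hJ, pow_succ]
    _ ≤ d ^ (Fintype.card J - 2) * (2 * #(slicePattern f a e i)) :=
      Nat.mul_le_mul_left _ (mem_filter.1 hi).2
    _ = 2 * (d ^ (Fintype.card J - 2) * #(slicePattern f a e i)) := mul_left_comm _ _ _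
    _ ≤ 2 * #{x : J → ι | x a = i ∧ f x ≠ 0} :=
      Nat.mul_le_mul_left _ (hd.pow_mul_card_slicePattern_le hae hf i)
    _ = 2 * #{x ∈ {x : J → ι | f x ≠ 0} | x a = i} := by
      simp only [filter_filter, and_comm]

theorem card_heavySlices_lt (hd : HasMinWeight D d) (hae : a ≠ e) {f : (J → ι) → F}
    (hf : f ∈ lineCode D {a, e}ᶜ) (hlt : 2 * hammingNorm f < d ^ Fintype.card J) :
    #(heavySlices f a e d) < d := by
  refine lt_of_mul_lt_mul_left' (a := d ^ (Fintype.card J - 1))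
    ((hd.pow_mul_card_heavySlices_le hae hf).trans_lt ?_)
  rwa [← pow_succ, Nat.sub_add_cancel (Fintype.card_pos_iff.2 ⟨a⟩)]

theorem eq_of_notMem_heavySlices (hd : HasMinWeight D d) (hae : a ≠ e) (hbe : b ≠ e)
    {g₁ g₂ : (J → ι) → F} (g₃ : (J → ι) → F)
    (hg₁ : g₁ ∈ lineCode D {a}ᶜ) (hg₂ : g₂ ∈ lineCode D {b}ᶜ) {x : J → ι}
    (hxa : x a ∉ heavySlices (g₁ - g₃) a e d) (hxb : x b ∉ heavySlices (g₂ - g₃) b e d) :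
    g₁ x = g₂ x := by
  simp only [heavySlices, mem_filter, mem_univ, true_and] at hxa hxb
  set P := slicePattern (g₁ - g₃) a e (x a)
  set Q := slicePattern (g₂ - g₃) b e (x b)
  have hPQ : #(P ∪ Q) < d := by have := card_union_le P Q; omega
  have hline : g₁ ∘ update x e = g₂ ∘ update x e := by
    refine hd.eq_of_eqOn_compl hPQ (hg₁ e (by simpa using hae.symm) x)
      (hg₂ e (by simpa using hbe.symm) x) fun k hk => ?_
    rw [mem_union, not_or] at hk
    have h₁ : (g₁ - g₃) (update x e k) = 0 := by
      by_contra hne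
      exact hk.1 (by simpa [update_of_ne hae] using mem_slicePattern_self a e hne)
    have h₂ : (g₂ - g₃) (update x e k) = 0 := by
      by_contra hne
      exact hk.2 (by simpa [update_of_ne hbe] using mem_slicePattern_self b e hne)
    exact (sub_eq_zero.1 h₁).trans (sub_eq_zero.1 h₂).symm
  simpa using congrFun hline (x e)

end HasMinWeight

end HeavySlices

section Extension

variable [DecidableEq J] {D : Submodule F (ι → F)} {d : ℕ} {a b : J}

/-- The word obtained from `g` by applying the linear map `L` to every line in direction `a`. -/
def mapLines (L : (ι → F) →ₗ[F] (ι → F)) (a : J) (g : (J → ι) → F) : (J → ι) → F :=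
  fun x => L (g ∘ update x a) (x a)

theorem mapLines_comp_update_self (L : (ι → F) →ₗ[F] (ι → F)) (a : J) (g : (J → ι) → F)
    (x : J → ι) : mapLines L a g ∘ update x a = L (g ∘ update x a) := by
  funext i
  simp only [mapLines, comp_apply, update_self, comp_def, update_idem]

theorem mapLines_comp_update_of_ne [Fintype ι] [DecidableEq ι] (L : (ι → F) →ₗ[F] (ι → F))
    {e : J} (hea : e ≠ a) (g : (J → ι) → F) (x : J → ι) :
    mapLines L a g ∘ update x e =
      ∑ i, L (Pi.single i 1) (x a) • (g ∘ update (update x a i) e) := by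
  funext k
  have hexpand : L (g ∘ update (update x e k) a) =
      ∑ i, g (update (update x a i) e k) • L (Pi.single i 1) := by
    rw [pi_eq_sum_univ' (g ∘ update (update x e k) a), map_sum]
    simp only [map_smul, comp_apply, update_comm hea]
  simp only [mapLines, comp_apply, update_of_ne hea.symm, hexpand, Finset.sum_apply,
    Pi.smul_apply, smul_eq_mul, mul_comm]

variable [Fintype J]

theorem mapLines_mem_tensorCode [Finite ι] {L : (ι → F) →ₗ[F] (ι → F)} (hL : ∀ w, L w ∈ D)
    {g : (J → ι) → F} (hg : g ∈ lineCode D {a}ᶜ) : mapLines L a g ∈ tensorCode D J := by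
  classical
  have := Fintype.ofFinite ι
  intro e _ x
  rcases eq_or_ne e a with rfl | hea
  · rw [mapLines_comp_update_self]
    exact hL _
  · rw [mapLines_comp_update_of_ne L hea]
    exact D.sum_mem fun i _ => D.smul_mem _ (hg e (by simpa using hea) _)

variable [Fintype ι] [DecidableEq F]

theorem HasMinWeight.exists_mem_tensorCode_eqOn (hd : HasMinWeight D d) (hab : a ≠ b)
    {g₁ g₂ : (J → ι) → F} (hg₁ : g₁ ∈ lineCode D {a}ᶜ) (hg₂ : g₂ ∈ lineCode D {b}ᶜ)
    {A B : Finset ι} (hA : #A < d) (hB : #B < d)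
    (hagree : ∀ x : J → ι, x a ∉ A → x b ∉ B → g₁ x = g₂ x) :
    ∃ c ∈ tensorCode D J, ∀ x, x a ∉ A → c x = g₁ x := by
  obtain ⟨L, hLD, hLid, hLcongr⟩ := hd.exists_erasureDecoder hA
  have hc := mapLines_mem_tensorCode hLD hg₁
  have hc_eq : ∀ x : J → ι, x b ∉ B → mapLines L a g₁ x = g₂ x := by
    intro x hxb
    have hdecode : L (g₁ ∘ update x a) = L (g₂ ∘ update x a) :=
      hLcongr _ _ fun i hi =>
        hagree _ (by simpa using hi) (by simpa [update_of_ne hab.symm] using hxb)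
    rw [mapLines, hdecode, hLid _ (hg₂ a (by simpa using hab) x)]
    simp
  refine ⟨mapLines L a g₁, hc, fun x hxa => ?_⟩
  have hline : mapLines L a g₁ ∘ update x b = g₁ ∘ update x b := by
    refine hd.eq_of_eqOn_compl hB (hc b (mem_univ b) x)
      (hg₁ b (by simpa using hab.symm) x) fun i hi => ?_
    have hi' : update x b i b ∉ B := by simpa using hi
    exact (hc_eq _ hi').trans (hagree _ (by simpa [update_of_ne hab] using hxa) hi').symm
  simpa using congrFun hline (x b)

theorem HasMinWeight.exists_mem_tensorCode_near (hd : HasMinWeight D d)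
    (hN : Fintype.card ι ^ Fintype.card J ≤ 2 * d ^ Fintype.card J)
    {a b e : J} (hab : a ≠ b) (hae : a ≠ e) (hbe : b ≠ e) (r : (J → ι) → F)
    {g₁ g₂ g₃ : (J → ι) → F} (hg₁ : g₁ ∈ lineCode D {a}ᶜ) (hg₂ : g₂ ∈ lineCode D {b}ᶜ)
    (hg₃ : g₃ ∈ lineCode D {e}ᶜ) :
    ∃ c ∈ tensorCode D J,
      hammingDist r c ≤ 5 * (hammingDist r g₁ + hammingDist r g₂ + hammingDist r g₃) := by
  classical
  have hg₁₃ : g₁ - g₃ ∈ lineCode D {a, e}ᶜ :=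
    sub_mem (lineCode_anti (by simp) hg₁) (lineCode_anti (by simp) hg₃)
  have hg₂₃ : g₂ - g₃ ∈ lineCode D {b, e}ᶜ :=
    sub_mem (lineCode_anti (by simp) hg₂) (lineCode_anti (by simp) hg₃)
  have hdist (g : (J → ι) → F) : hammingNorm (g - g₃) ≤ hammingDist r g + hammingDist r g₃ := by
    rw [← neg_add_eq_sub, ← hammingDist_eq_hammingNorm, add_comm]
    exact hammingDist_triangle_left g₃ g r
  have hdist₁₃ := hdist g₁
  have hdist₂₃ := hdist g₂
  rcases le_or_gt (d ^ Fintype.card J)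
    (2 * (hammingDist r g₁ + hammingDist r g₂ + hammingDist r g₃)) with hfar | hnear
  · have hr : hammingDist r 0 ≤ Fintype.card ι ^ Fintype.card J :=
      Fintype.card_fun (α := J) (β := ι) ▸ hammingDist_le_card_fintype
    exact ⟨0, zero_mem _, by omega⟩
  obtain ⟨c, hc, hcg⟩ := hd.exists_mem_tensorCode_eqOn hab hg₁ hg₂
    (hd.card_heavySlices_lt hae hg₁₃ (by omega)) (hd.card_heavySlices_lt hbe hg₂₃ (by omega))
    fun x => hd.eq_of_notMem_heavySlices hae hbe g₃ hg₁ hg₂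
  refine ⟨c, hc, ?_⟩
  set A := heavySlices (g₁ - g₃) a e d
  have hslab : #A * Fintype.card ι ^ (Fintype.card J - 1) ≤ 4 * hammingNorm (g₁ - g₃) :=
    calc
      #A * Fintype.card ι ^ (Fintype.card J - 1)
          ≤ #A * (2 * d ^ (Fintype.card J - 1)) :=
        Nat.mul_le_mul_left _ (pow_le_two_mul_pow_of_le (Nat.sub_le _ 1) hN)
      _ = 2 * (d ^ (Fintype.card J - 1) * #A) := by ring
      _ ≤ 2 * (2 * hammingNorm (g₁ - g₃)) :=
        Nat.mul_le_mul_left _ (hd.pow_mul_card_heavySlices_le hae hg₁₃)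
      _ = 4 * hammingNorm (g₁ - g₃) := by ring
  have hrc := hammingDist_le_add_card_mul_of_eqOn (r := r) hcg
  omega

end Extension

end GridCodes

section TannerCodes

/-- The Tanner product code `TPC(G, C)`, where the graph `G` is given by its adjacency lists: the
test `j` reads the coordinates `ℓ j q`, in the order prescribed by the coordinates `q` of `C`. -/
def tannerCode {R ι κ F : Type*} (ℓ : R → κ → ι) (C : Set (κ → F)) : Set (ι → F) :=
  {r | ∀ j, r ∘ ℓ j ∈ C}

theorem tannerCode_comp {R₁ R₂ ι κ μ F : Type*} (ℓ₁ : R₁ → κ → ι) (ℓ₂ : R₂ → μ → κ)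
    (C : Set (μ → F)) :
    tannerCode (fun p : R₁ × R₂ => ℓ₁ p.1 ∘ ℓ₂ p.2) C = tannerCode ℓ₁ (tannerCode ℓ₂ C) :=
  Set.ext fun _ => Prod.forall

variable {R R₁ R₂ ι κ μ F : Type} [Fintype R] [Fintype R₁] [Fintype R₂] [Fintype ι] [Fintype κ]
  [Fintype μ] [DecidableEq F]

theorem relHammingDist_nonneg (x y : ι → F) : 0 ≤ relHammingDist x y :=
  div_nonneg (Nat.cast_nonneg _) (Nat.cast_nonneg _)

theorem relHammingDist_comp_equiv (e : ι ≃ κ) (x y : κ → F) :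
    relHammingDist (x ∘ e) (y ∘ e) = relHammingDist x y := by
  simp only [relHammingDist, hammingDist, comp_apply, card_filter, Fintype.card_congr e]
  rw [e.sum_comp fun i => if x i ≠ y i then 1 else 0]

theorem distToCode_nonneg (C : Set (ι → F)) (r : ι → F) : 0 ≤ distToCode C r :=
  Real.sInf_nonneg (Set.forall_mem_image.2 fun c _ => relHammingDist_nonneg r c)

theorem distToCode_le {C : Set (ι → F)} {c : ι → F} (hc : c ∈ C) (r : ι → F) :
    distToCode C r ≤ relHammingDist r c :=
  csInf_le ⟨0, Set.forall_mem_image.2 fun c _ => relHammingDist_nonneg r c⟩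
    (Set.mem_image_of_mem _ hc)

theorem exists_relHammingDist_eq_distToCode {C : Set (ι → F)} (hC : C.Nonempty) (r : ι → F) :
    ∃ c ∈ C, relHammingDist r c = distToCode C r := by
  have hfinite : (relHammingDist r '' C).Finite :=
    ((Set.finite_Iic (Fintype.card ι)).image fun k : ℕ => (k : ℝ) / Fintype.card ι).subset
      (Set.image_subset_iff.2 fun c _ => ⟨hammingDist r c, hammingDist_le_card_fintype, rfl⟩)
  exact (hC.image _).csInf_mem hfinite

theorem distToCode_preimage_comp_equiv (e : ι ≃ κ) (C : Set (ι → F)) (r : κ → F) :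
    distToCode ((· ∘ e) ⁻¹' C) r = distToCode C (r ∘ e) := by
  have hsurj : Surjective fun c : κ → F => c ∘ e :=
    (e.arrowCongr (Equiv.refl F)).symm.surjective
  conv_rhs => rw [← Set.image_preimage_eq C hsurj]
  simp only [distToCode, Set.image_image, relHammingDist_comp_equiv]

/-- The Tanner pair given by the adjacency lists `ℓ` and the code `C` is `α`-robust: on average over
the tests, the view of `r` is at relative distance from `C` at least `α` times the relative distance
of `r` from the Tanner product code. -/
def IsRobust (α : ℝ) (ℓ : R → κ → ι) (C : Set (κ → F)) : Prop :=
  ∀ r : ι → F, α * distToCode (tannerCode ℓ C) r ≤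
    (∑ j, distToCode C (r ∘ ℓ j)) / Fintype.card R

namespace IsRobust

theorem mono {α β : ℝ} {ℓ : R → κ → ι} {C : Set (κ → F)} (h : IsRobust α ℓ C) (hβα : β ≤ α) :
    IsRobust β ℓ C := fun r =>
  (mul_le_mul_of_nonneg_right hβα (distToCode_nonneg _ _)).trans (h r)

theorem comp_equiv {α : ℝ} {ℓ : R → κ → ι} {C : Set (κ → F)} (h : IsRobust α ℓ C) (e : ι ≃ μ) :
    IsRobust α (fun j => e ∘ ℓ j) C := fun r =>
  (congrArg (α * ·) (distToCode_preimage_comp_equiv e (tannerCode ℓ C) r)).trans_le (h (r ∘ e))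

theorem comp {α β : ℝ} {ℓ₁ : R₁ → κ → ι} {ℓ₂ : R₂ → μ → κ} {C : Set (μ → F)}
    (h₁ : IsRobust α ℓ₁ (tannerCode ℓ₂ C)) (h₂ : IsRobust β ℓ₂ C)
    (hβ : 0 ≤ β) :
    IsRobust (α * β) (fun p : R₁ × R₂ => ℓ₁ p.1 ∘ ℓ₂ p.2) C := by
  intro r
  rw [tannerCode_comp]
  calc
    α * β * distToCode (tannerCode ℓ₁ (tannerCode ℓ₂ C)) r
        = β * (α * distToCode (tannerCode ℓ₁ (tannerCode ℓ₂ C)) r) := by ring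
    _ ≤ β * ((∑ j, distToCode (tannerCode ℓ₂ C) (r ∘ ℓ₁ j)) / Fintype.card R₁) :=
      mul_le_mul_of_nonneg_left (h₁ r) hβ
    _ = (∑ j, β * distToCode (tannerCode ℓ₂ C) (r ∘ ℓ₁ j)) / Fintype.card R₁ := by
      rw [mul_div_assoc', mul_sum]
    _ ≤ (∑ j, (∑ k, distToCode C ((r ∘ ℓ₁ j) ∘ ℓ₂ k)) / Fintype.card R₂) / Fintype.card R₁ := by
      gcongr with j
      exact h₂ (r ∘ ℓ₁ j)
    _ = (∑ p : R₁ × R₂, distToCode C (r ∘ ℓ₁ p.1 ∘ ℓ₂ p.2)) / Fintype.card (R₁ × R₂) := by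
      rw [← sum_div, div_div, Fintype.sum_prod_type, Fintype.card_prod, Nat.cast_mul, mul_comm]
      rfl

end IsRobust

end TannerCodes

section ProductTester

/-- The test `(b, i)` of the `(k + 1)`-Product tester: it reads the slice `{x | x b = i}`. -/
def productView {ι : Type*} {k : ℕ} (p : Fin (k + 1) × ι) : (Fin k → ι) → Fin (k + 1) → ι :=
  p.1.insertNth (α := fun _ => ι) p.2

theorem productView_comp_update {ι : Type*} {k : ℕ} (p : Fin (k + 1) × ι) (x : Fin k → ι)
    (e : Fin k) : productView p ∘ update x e = update (productView p x) (p.1.succAbove e) :=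
  funext fun i => Fin.insertNth_update (α := fun _ => ι) p.1 p.2 e i x

theorem tannerCode_productView {ι F : Type*} [Field F] {k : ℕ} (D : Submodule F (ι → F)) :
    tannerCode productView (tensorCode D (Fin (k + 1)) : Set ((Fin (k + 1) → ι) → F)) =
      tensorCode D (Fin (k + 2)) := by
  ext r
  constructor
  · intro hr e _ x
    obtain ⟨b, hb⟩ := exists_ne e
    obtain ⟨e, rfl⟩ := Fin.exists_succAbove_eq hb.symm
    have hline := hr (b, x b) e (mem_univ e) (b.removeNth x)
    rw [comp_assoc, productView_comp_update] at hline
    simpa [productView] using hline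
  · intro hr p e _ x
    rw [comp_assoc, productView_comp_update]
    exact hr _ (mem_univ _) _

theorem tannerCode_g42view {ι : Type} {F : Type*} [Field F] (D : Submodule F (ι → F)) :
    tannerCode g42view (tensorCode D (Fin 2) : Set ((Fin 2 → ι) → F)) = tensorCode D (Fin 4) :=
  (tannerCode_comp productView productView _).trans (by simp only [tannerCode_productView])

/-- The word whose slice `{x | x b = i}` is `w i`. -/
def glueSlices {ι F : Type*} {k : ℕ} (b : Fin (k + 1)) (w : ι → (Fin k → ι) → F) :
    (Fin (k + 1) → ι) → F :=
  fun x => w (x b) (b.removeNth x)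

theorem glueSlices_mem_lineCode {ι F : Type*} [Field F] {k : ℕ} {D : Submodule F (ι → F)}
    (b : Fin (k + 1)) {w : ι → (Fin k → ι) → F} (hw : ∀ i, w i ∈ tensorCode D (Fin k)) :
    glueSlices b w ∈ lineCode D {b}ᶜ := by
  intro e he x
  obtain ⟨e, rfl⟩ := Fin.exists_succAbove_eq (by simpa using he : e ≠ b)
  have hline : glueSlices b w ∘ update x (b.succAbove e) =
      w (x b) ∘ update (b.removeNth x) e := by
    funext j
    simp [glueSlices, Fin.removeNth_update_succAbove]
  rw [hline]
  exact hw (x b) e (mem_univ e) _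

theorem hammingDist_glueSlices {ι F : Type*} [Fintype ι] [DecidableEq F] {k : ℕ} (b : Fin (k + 1))
    (r : (Fin (k + 1) → ι) → F) (w : ι → (Fin k → ι) → F) :
    hammingDist r (glueSlices b w) = ∑ i, hammingDist (r ∘ productView (b, i)) (w i) := by
  simp only [hammingDist, card_filter]
  rw [← (Fin.insertNthEquiv (fun _ => ι) b).sum_comp, Fintype.sum_prod_type]
  refine Fintype.sum_congr _ _ fun i => Fintype.sum_congr _ _ fun y => if_congr ?_ rfl rfl
  simp [glueSlices, productView, Fin.insertNthEquiv]

theorem HasMinWeight.exists_mem_tensorCode_le_sum {ι F : Type*} [Fintype ι] [Field F]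
    [DecidableEq F] {D : Submodule F (ι → F)} {d k : ℕ} (hd : HasMinWeight D d)
    (hN : Fintype.card ι ^ (k + 3) ≤ 2 * d ^ (k + 3)) (r : (Fin (k + 3) → ι) → F)
    {w : Fin (k + 3) × ι → (Fin (k + 2) → ι) → F} (hw : ∀ p, w p ∈ tensorCode D (Fin (k + 2))) :
    ∃ c ∈ tensorCode D (Fin (k + 3)),
      hammingDist r c ≤ 5 * ∑ p, hammingDist (r ∘ productView p) (w p) := by
  let g (b : Fin (k + 3)) : (Fin (k + 3) → ι) → F := glueSlices b fun i => w (b, i)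
  have hg (b : Fin (k + 3)) : g b ∈ lineCode D {b}ᶜ := glueSlices_mem_lineCode b fun i => hw (b, i)
  obtain ⟨a, b, e, hab, hae, hbe⟩ : ∃ a b e : Fin (k + 3), a ≠ b ∧ a ≠ e ∧ b ≠ e :=
    Fintype.two_lt_card_iff.1 (by simp)
  obtain ⟨c, hc, hrc⟩ := hd.exists_mem_tensorCode_near (by simpa using hN) hab hae hbe r
    (hg a) (hg b) (hg e)
  refine ⟨c, hc, hrc.trans (Nat.mul_le_mul_left 5 ?_)⟩
  calc
    hammingDist r (g a) + hammingDist r (g b) + hammingDist r (g e)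
        = ∑ b ∈ {a, b, e}, hammingDist r (g b) := by simp [hab, hae, hbe, add_assoc]
    _ ≤ ∑ b, hammingDist r (g b) := sum_le_sum_of_subset (subset_univ _)
    _ = ∑ p, hammingDist (r ∘ productView p) (w p) := by
      simp only [g, hammingDist_glueSlices, Fintype.sum_prod_type]

variable {ι F : Type} [Fintype ι] [Field F] [DecidableEq F] {D : Submodule F (ι → F)} {d : ℕ}

theorem HasMinWeight.isRobust_productView {k : ℕ} (hd : HasMinWeight D d)
    (hN : Fintype.card ι ^ (k + 3) ≤ 2 * d ^ (k + 3)) :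
    IsRobust (1 / (5 * (k + 3))) productView
      (tensorCode D (Fin (k + 2)) : Set ((Fin (k + 2) → ι) → F)) := by
  intro r
  rw [tannerCode_productView]
  choose w hw hwdist using fun p : Fin (k + 3) × ι => exists_relHammingDist_eq_distToCode
    (C := (tensorCode D (Fin (k + 2)) : Set ((Fin (k + 2) → ι) → F))) ⟨0, zero_mem _⟩
    (r ∘ productView p)
  obtain ⟨c, hc, hrc⟩ := hd.exists_mem_tensorCode_le_sum hN r hw
  have hdist : distToCode (tensorCode D (Fin (k + 3)) : Set ((Fin (k + 3) → ι) → F)) r ≤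
      hammingDist r c / (Fintype.card ι : ℝ) ^ (k + 3) := by
    simpa [relHammingDist] using distToCode_le hc r
  simp only [← hwdist, relHammingDist, ← sum_div, Fintype.card_fun, Fintype.card_fin,
    Fintype.card_prod]
  calc
    1 / (5 * (k + 3) : ℝ) * distToCode (tensorCode D (Fin (k + 3)) : Set ((Fin (k + 3) → ι) → F)) r
        ≤ 1 / (5 * (k + 3)) * ((5 * ∑ p, hammingDist (r ∘ productView p) (w p) : ℕ) /
          (Fintype.card ι : ℝ) ^ (k + 3)) := by
      refine mul_le_mul_of_nonneg_left (hdist.trans ?_) (by positivity)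
      gcongr
    _ = (∑ p, (hammingDist (r ∘ productView p) (w p) : ℝ)) /
        (Fintype.card ι ^ (k + 2) : ℕ) / ((k + 3) * Fintype.card ι : ℕ) := by
      push_cast
      simp only [div_eq_mul_inv, mul_inv]
      ring

theorem HasMinWeight.isRobust_g42view (hd : HasMinWeight D d)
    (hN : Fintype.card ι ^ 4 ≤ 2 * d ^ 4) :
    IsRobust (1 / 300) g42view (tensorCode D (Fin 2) : Set ((Fin 2 → ι) → F)) := by
  have hslice : IsRobust (1 / 20) productView
      (tannerCode productView (tensorCode D (Fin 2) : Set ((Fin 2 → ι) → F))) := by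
    rw [tannerCode_productView]
    exact (hd.isRobust_productView (k := 1) hN).mono (by norm_num)
  have hplane : IsRobust (1 / 15) productView (tensorCode D (Fin 2) : Set ((Fin 2 → ι) → F)) :=
    (hd.isRobust_productView (k := 0) (pow_le_two_mul_pow_of_le (by norm_num) hN)).mono
      (by norm_num)
  have hcomp := hslice.comp hplane (by norm_num)
  exact hcomp.mono (by norm_num)

end ProductTester

section Blocks

variable {F ι : Type*} [Field F] {D : Submodule F (ι → F)}

theorem comp_arrowCongr_mem_tensorCode {J K : Type*} [Fintype J] [Fintype K] [DecidableEq J]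
    [DecidableEq K] (e : J ≃ K) {r : (K → ι) → F} :
    r ∘ e.arrowCongr (Equiv.refl ι) ∈ tensorCode D J ↔ r ∈ tensorCode D K := by
  have hupdate (x : K → ι) (b : K) :
      e.arrowCongr (Equiv.refl ι) ∘ update (x ∘ e) (e.symm b) = update x b := by
    funext i
    simp [Equiv.arrowCongr, update_comp_equiv, comp_assoc]
  constructor
  · intro hr b _ x
    rw [← hupdate]
    exact hr _ (mem_univ _) _
  · intro hr b _ x
    have hline := hr (e b) (mem_univ _) (x ∘ e.symm)
    rw [← hupdate] at hline
    simpa [comp_assoc] using hline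

theorem comp_curry_symm_mem_tensorCode {A B : Type*} [Fintype A] [Fintype B] [DecidableEq A]
    [DecidableEq B] {r : (A × B → ι) → F} :
    r ∘ (Equiv.curry A B ι).symm ∈ tensorCode (tensorCode D B) A ↔ r ∈ tensorCode D (A × B) := by
  have hupdate (x : A → B → ι) (a : A) (y : B → ι) (b : B) :
      (Equiv.curry A B ι).symm ∘ update x a ∘ update y b =
        update (uncurry (update x a y)) (a, b) := by
    funext i
    rw [← uncurry_update_update, update_self, update_idem]
    rfl
  constructor
  · rintro hr ⟨a, b⟩ _ x
    have hline := hr a (mem_univ a) (curry x) b (mem_univ b) (curry x a)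
    rwa [comp_assoc, comp_assoc, hupdate, update_eq_self, uncurry_curry] at hline
  · intro hr a _ x b _ y
    rw [comp_assoc, comp_assoc, hupdate]
    exact hr (a, b) (mem_univ _) _

end Blocks

section RecursiveGraph

variable {F : Type*} [Field F] {n : ℕ} (C : Submodule F (Fin n → F))

theorem comp_reFin_mem_tensorCode {a b : ℕ} (h : a = b) {r : (Fin b → Fin n) → F} :
    r ∘ reFin n h ∈ tensorCode C (Fin a) ↔ r ∈ tensorCode C (Fin b) :=
  comp_arrowCongr_mem_tensorCode (finCongr h)

theorem comp_blockEquiv_mem_tensorCode {a b : ℕ} {r : (Fin (a * b) → Fin n) → F} :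
    r ∘ blockEquiv n a b ∈ tensorCode (tensorCode C (Fin b)) (Fin a) ↔
      r ∈ tensorCode C (Fin (a * b)) := by
  rw [← comp_arrowCongr_mem_tensorCode finProdFinEquiv, ← comp_curry_symm_mem_tensorCode]
  rfl

/-- The identification of words on the grid `[n]^{k m}` with words on the grid of side `[n]^m` in
`k` directions. -/
def regroup (n : ℕ) {k m N : ℕ} (h : k * m = N) : (Fin k → Fin m → Fin n) ≃ (Fin N → Fin n) :=
  (blockEquiv n k m).trans (reFin n h)

theorem comp_regroup_mem_tensorCode {k m N : ℕ} (h : k * m = N) {r : (Fin N → Fin n) → F} :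
    r ∘ regroup n h ∈ tensorCode (tensorCode C (Fin m)) (Fin k) ↔ r ∈ tensorCode C (Fin N) := by
  rw [← comp_reFin_mem_tensorCode C h, ← comp_blockEquiv_mem_tensorCode]
  rfl

theorem tannerCode_regroup {R κ : Type*} {k m N : ℕ} (h : k * m = N)
    {ℓ : R → κ → Fin k → Fin m → Fin n} {C' : Set (κ → F)}
    (hℓ : tannerCode ℓ C' = tensorCode (tensorCode C (Fin m)) (Fin k)) :
    tannerCode (fun j => regroup n h ∘ ℓ j) C' = tensorCode C (Fin N) :=
  Set.ext fun r => (Set.ext_iff.1 hℓ (r ∘ regroup n h)).trans (comp_regroup_mem_tensorCode C h)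

theorem tannerCode_regroup_symm {R κ : Type*} {k m N : ℕ} (h : k * m = N)
    {ℓ : R → κ → Fin N → Fin n} {C' : Set (κ → F)} (hℓ : tannerCode ℓ C' = tensorCode C (Fin N)) :
    tannerCode (fun j => (regroup n h).symm ∘ ℓ j) C' =
      tensorCode (tensorCode C (Fin m)) (Fin k) := by
  ext r
  refine (Set.ext_iff.1 hℓ (r ∘ (regroup n h).symm)).trans ?_
  rw [SetLike.mem_coe, ← comp_regroup_mem_tensorCode C h, comp_assoc, Equiv.symm_comp_self, comp_id,
    SetLike.mem_coe]

theorem ellH_zero (n : ℕ) : ellH n 0 = fun p => reFin n (by norm_num) ∘ g42view p :=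
  rfl

theorem ellH_succ (n s : ℕ) : ellH n (s + 1) =
    fun p => (regroup n (by ring) ∘ g42view p.1) ∘
      ((regroup n (pow_succ' 2 (s + 1)).symm).symm ∘ ellH n s p.2) :=
  rfl

theorem tannerCode_ellH (s : ℕ) :
    tannerCode (ellH n s) (tensorCode C (Fin 2) : Set ((Fin 2 → Fin n) → F)) =
      tensorCode C (Fin (2 ^ (s + 2))) := by
  induction s with
  | zero =>
    rw [ellH_zero]
    have h : 4 = 2 ^ (0 + 2) := by norm_num
    exact Set.ext fun r => (Set.ext_iff.1 (tannerCode_g42view C) (r ∘ reFin n h)).trans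
      (comp_reFin_mem_tensorCode C h)
  | succ s ih =>
    rw [ellH_succ]
    have hinner := tannerCode_regroup_symm C (pow_succ' 2 (s + 1)).symm ih
    have houter := tannerCode_regroup C (by ring : 4 * 2 ^ (s + 1) = 2 ^ (s + 1 + 2))
      (tannerCode_g42view (tensorCode C (Fin (2 ^ (s + 1)))))
    rw [← hinner] at houter
    exact (tannerCode_comp _ _ _).trans houter

theorem isRobust_ellH {F : Type} [Field F] [DecidableEq F] {C : Submodule F (Fin n → F)}
    {d s : ℕ} (hd : HasMinWeight C d) (hn : n ^ 2 ^ (s + 2) ≤ 2 * d ^ 2 ^ (s + 2)) :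
    IsRobust ((1 / 300) ^ (s + 1)) (ellH n s)
      (tensorCode C (Fin 2) : Set ((Fin 2 → Fin n) → F)) := by
  induction s with
  | zero =>
    have hg42 := (hd.isRobust_g42view (by simpa using hn)).comp_equiv
      (reFin n (by norm_num : 4 = 2 ^ (0 + 2)))
    exact hg42.mono (by norm_num)
  | succ s ih =>
    have hinner := (ih (pow_le_two_mul_pow_of_le
      (Nat.pow_le_pow_right two_pos (Nat.le_succ _)) hn)).comp_equiv
        (regroup n (pow_succ' 2 (s + 1)).symm).symm
    have hn' : Fintype.card (Fin (2 ^ (s + 1)) → Fin n) ^ 4 ≤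
        2 * (d ^ Fintype.card (Fin (2 ^ (s + 1)))) ^ 4 := by
      have hexp : 2 ^ (s + 1) * 4 = 2 ^ (s + 1 + 2) := by ring
      simpa only [Fintype.card_fun, Fintype.card_fin, ← pow_mul, hexp] using hn
    have houter := (hd.tensorCode.isRobust_g42view hn').comp_equiv
      (regroup n (by ring : 4 * 2 ^ (s + 1) = 2 ^ (s + 1 + 2)))
    rw [← tannerCode_regroup_symm C (pow_succ' 2 (s + 1)).symm (tannerCode_ellH C s)] at houter
    exact (houter.comp hinner (by positivity)).mono (pow_succ' _ _).le

end RecursiveGraph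

theorem pow_lt_two_mul_pow_of_one_sub_mul_le {n d m : ℕ} (hm : 0 < m)
    (h : (1 - 1 / (10 * m : ℝ)) * n ≤ d - 1) : n ^ m < 2 * d ^ m := by
  have hm' : (1 : ℝ) ≤ m := mod_cast hm
  have hsmall : 1 / (10 * m : ℝ) ≤ 1 := by
    rw [div_le_one (by positivity)]
    linarith
  have hbernoulli : (9 / 10 : ℝ) ≤ (1 - 1 / (10 * m : ℝ)) ^ m :=
    calc
      (9 / 10 : ℝ) = 1 + m * (-(1 / (10 * m : ℝ))) := by
        field_simp
        norm_num
      _ ≤ (1 + -(1 / (10 * m : ℝ))) ^ m := one_add_mul_le_pow (by linarith) m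
      _ = (1 - 1 / (10 * m : ℝ)) ^ m := by rw [sub_eq_add_neg]
  have hnonneg : 0 ≤ (1 - 1 / (10 * m : ℝ)) * n :=
    mul_nonneg (sub_nonneg.2 hsmall) (Nat.cast_nonneg n)
  have hpow : 9 / 10 * (n : ℝ) ^ m ≤ (d : ℝ) ^ m :=
    calc
      9 / 10 * (n : ℝ) ^ m ≤ (1 - 1 / (10 * m : ℝ)) ^ m * n ^ m := by gcongr
      _ = ((1 - 1 / (10 * m : ℝ)) * n) ^ m := (mul_pow _ _ _).symm
      _ ≤ (d : ℝ) ^ m := pow_le_pow_left₀ hnonneg (by linarith) m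
  have hd : (0 : ℝ) < (d : ℝ) ^ m := pow_pos (by linarith) m
  have hlt : (n : ℝ) ^ m < 2 * (d : ℝ) ^ m := by linarith
  exact_mod_cast hlt

theorem hasMinWeight_minDist {ι F : Type} [Fintype ι] [Field F] [DecidableEq F]
    (C : Submodule F (ι → F)) :
    HasMinWeight C (minDist (C : Set (ι → F))) := fun w hw hne =>
  Nat.sInf_le ⟨w, hw, 0, C.zero_mem, hne, hammingDist_zero_right w⟩

theorem coe_tensorCode {F : Type} [Field F] {n : ℕ} (C : Submodule F (Fin n → F)) (m : ℕ) :
    (tensorCode C (Fin m) : Set ((Fin m → Fin n) → F)) = tensorPow (C : Set (Fin n → F)) m :=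
  Set.ext fun _ => forall_congr' fun _ => forall_prop_of_true (mem_univ _)

theorem recursive_tanner_robust_general {F : Type} [Field F] [DecidableEq F] {n s : ℕ}
    (C : Submodule F (Fin n → F))
    (hC : n ^ 2 ^ (s + 2) < 2 * minDist (C : Set (Fin n → F)) ^ 2 ^ (s + 2)) :
    tensorPow (C : Set (Fin n → F)) (2 ^ (s + 2)) =
        tannerCode (ellH n s) (tensorPow (C : Set (Fin n → F)) 2) ∧
      IsRobust ((1 / 300) ^ (s + 1)) (ellH n s) (tensorPow (C : Set (Fin n → F)) 2) := by
  rw [← coe_tensorCode, ← coe_tensorCode]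
  exact ⟨(tannerCode_ellH C s).symm, isRobust_ellH (hasMinWeight_minDist C) hC.le⟩

end RobustTesting

/-- There is a constant `α > 0` (one may take `α = 2^{-32}`) such that for
every `t ≥ 2` (written `t = s + 2`) and every `[n,k,d]` code `C` with
`d − 1 ≥ (1 − 1/(10m))·n` for `m = 2^t`, the Tanner pair `(H^n_t, C²)` is `α^t`-robust;
in particular `C^{2^t} = TPC(H^n_t, C²)`, and the expected distance of the view of a
random test of `H^n_t` from `C²` is at least `α^t` times `δ_{C^{2^t}}(r)`. -/
theorem recursive_tanner_robust :
    ∃ α : ℝ, 0 < α ∧ α = (2 : ℝ) ^ (-32 : ℤ) ∧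
    ∀ (F : Type) [Field F] [Fintype F] [DecidableEq F]
      (n k d s : ℕ) (C : Submodule F (Fin n → F)),
      Module.finrank F C = k →
      minDist (C : Set (Fin n → F)) = d →
      ((1 - 1 / (10 * (2 : ℝ) ^ (s + 2))) * n ≤ (d : ℝ) - 1) →
      (tensorPow (C : Set (Fin n → F)) (2 ^ (s + 2)) =
        {r | ∀ j : Rty n s, (fun q => r (ellH n s j q)) ∈ tensorPow (C : Set (Fin n → F)) 2}) ∧
      ∀ r : (Fin (2 ^ (s + 2)) → Fin n) → F,
        α ^ (s + 2) * distToCode (tensorPow (C : Set (Fin n → F)) (2 ^ (s + 2))) r ≤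
          (∑ j : Rty n s,
            distToCode (tensorPow (C : Set (Fin n → F)) 2) (fun q => r (ellH n s j q))) /
            (Fintype.card (Rty n s)) := by
  refine ⟨2 ^ (-32 : ℤ), by positivity, rfl, fun F _ _ _ n k d s C _ hd hdist => ?_⟩
  obtain ⟨hcode, hrobust⟩ := recursive_tanner_robust_general C (s := s)
    (pow_lt_two_mul_pow_of_one_sub_mul_le (by positivity) (by simpa [hd] using hdist))
  have hα : ((2 : ℝ) ^ (-32 : ℤ)) ^ (s + 2) ≤ (1 / 300) ^ (s + 1) :=
    calc
      ((2 : ℝ) ^ (-32 : ℤ)) ^ (s + 2) ≤ (2 ^ (-32 : ℤ)) ^ (s + 1) :=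
        pow_le_pow_of_le_one (by positivity) (by norm_num) (Nat.le_succ _)
      _ ≤ (1 / 300) ^ (s + 1) := by gcongr; norm_num
  refine ⟨hcode, fun r => ?_⟩
  rw [hcode]
  exact hrobust.mono hα r
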